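/- arXiv:1501.05425 — 2 statements merged into one kernel-verified Lean document; each statement's English description precedes it below -/
import Mathlib

section
/- Every function m : Stream' ℕ → Stream' ℕ → Stream' ℕ satisfying the corecursive equation m xs ys = SCons (head xs * head ys) ((m xs (tail ys)) ⊕ (m (tail xs) ys)) for all streams xs, ys, where ⊕ is pointwise addition, is commutative: m xs ys = m ys xs for all xs, ys. -/
open Stream'

/-- Pointwise addition of streams. -/
def sadd (xs ys : Stream' ℕ) : Stream' ℕ := fun n => xs.get n + ys.get n

infixl:65 " ⊕ " => sadd

/-!
The corecursive equation has at most one solution `m`: by induction on `n`, it determines the `n`-th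
element of `m xs ys` for all `xs` and `ys` at once. Swapping the arguments of `m` gives a solution
of the equation in which products and sums are swapped as well, which is the same equation since
both are commutative. Hence `m` agrees with its swap.
-/

section ShuffleProduct

variable {α β γ : Type*}

/-- `m` solves the corecursive equation of the shuffle product of streams, with `f` in place of
multiplication of elements and `g` in place of their addition. Since `f` and `g` are arbitrary, the
two factors and the product may have elements of different types. -/
def IsShuffleProduct (f : α → β → γ) (g : γ → γ → γ) (m : Stream' α → Stream' β → Stream' γ) :
    Prop :=
  ∀ xs ys, m xs ys = cons (f xs.head ys.head) (zip g (m xs ys.tail) (m xs.tail ys))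

namespace IsShuffleProduct

variable {f : α → β → γ} {g : γ → γ → γ} {m m' : Stream' α → Stream' β → Stream' γ}

theorem get_zero (hm : IsShuffleProduct f g m) (xs : Stream' α) (ys : Stream' β) :
    (m xs ys).get 0 = f xs.head ys.head := by
  rw [hm, get_zero_cons]

theorem get_succ (hm : IsShuffleProduct f g m) (n : ℕ) (xs : Stream' α) (ys : Stream' β) :
    (m xs ys).get (n + 1) = g ((m xs ys.tail).get n) ((m xs.tail ys).get n) := by
  rw [hm, get_succ_cons, get_zip]

protected theorem unique (hm : IsShuffleProduct f g m) (hm' : IsShuffleProduct f g m') :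
    m = m' := by
  funext xs ys
  ext n
  induction n generalizing xs ys with
  | zero => rw [hm.get_zero, hm'.get_zero]
  | succ n ih => rw [hm.get_succ, hm'.get_succ, ih, ih]

protected theorem flip (hm : IsShuffleProduct f g m) :
    IsShuffleProduct (flip f) (flip g) (flip m) :=
  fun ys xs => hm xs ys

end IsShuffleProduct

theorem stmt_8_general {f : α → α → β} {g : β → β → β} {m : Stream' α → Stream' α → Stream' β}
    [IsSymmOp f] [Std.Commutative g] (hm : IsShuffleProduct f g m) :
    ∀ xs ys, m xs ys = m ys xs := by
  have hm_flip : IsShuffleProduct f g (flip m) := by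
    simpa only [IsSymmOp.flip_eq] using hm.flip
  exact congrFun₂ (hm.unique hm_flip)

end ShuffleProduct

theorem stmt_8 (m : Stream' ℕ → Stream' ℕ → Stream' ℕ)
    (hm : ∀ xs ys, m xs ys =
      Stream'.cons (xs.head * ys.head) ((m xs ys.tail) ⊕ (m xs.tail ys))) :
    ∀ xs ys, m xs ys = m ys xs := by
  have hm_shuffle : IsShuffleProduct (· * ·) (· + ·) m := hm
  exact stmt_8_general hm_shuffle
end

section
/- There exists exactly one function e : Stream' ℕ → Stream' ℕ satisfying the corecursive equation e xs = SCons (2 ^ head xs) ((tail xs) ⊗ (e xs)) for all streams xs, where ⊗ is the shuffle product (binomial convolution). -/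
open Stream'

/-- Shuffle product of streams (binomial convolution). -/
def sshuffle (xs ys : Stream' ℕ) : Stream' ℕ :=
  fun n => ∑ k ∈ Finset.range (n + 1), n.choose k * xs.get k * ys.get (n - k)

infixl:70 " ⊗ " => sshuffle

/-!
The first `n` entries of `xs ⊗ s` depend only on the first `n` entries of `s`, so prepending an
entry to `xs.tail ⊗ s` gives an operator on `s` whose first `n + 1` output entries depend only on
the first `n` input entries. Such an operator has a unique fixed point, by the contraction argument:
its `n`-th iterates all share the same first `n` entries, and the diagonal of the iterates is fixed.
-/

open Function

variable {α β : Type*}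

theorem take_eq_take_iff {n : ℕ} {s t : Stream' α} :
    s.take n = t.take n ↔ ∀ k < n, s.get k = t.get k := by
  simp [List.ext_getElem_iff]

/-- A stream operator is causal if the first `n` entries of its output are determined by the first
`n` entries of its input. -/
def IsCausal (F : Stream' α → Stream' β) : Prop :=
  ∀ ⦃n s t⦄, s.take n = t.take n → (F s).take n = (F t).take n

/-- A stream operator is strictly causal if the first `n + 1` entries of its output are determined
by the first `n` entries of its input, that is, if it contracts the prefix ultrametric. -/
def IsStrictlyCausal (F : Stream' α → Stream' β) : Prop :=
  ∀ ⦃n s t⦄, s.take n = t.take n → (F s).take (n + 1) = (F t).take (n + 1)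

theorem IsCausal.cons {F : Stream' α → Stream' β} (hF : IsCausal F) (b : β) :
    IsStrictlyCausal fun s => Stream'.cons b (F s) := by
  intro n s t hst
  simp only [take_succ_cons, hF hst]

/-- The diagonal `n ↦ (F^[n + 1] s).get n` of the iterates of `F` on `s`; for strictly causal `F` it
is the limit of these iterates, since entry `n` no longer changes after `n + 1` steps. -/
def iterateDiagonal (F : Stream' α → Stream' α) (s : Stream' α) : Stream' α :=
  fun n => (F^[n + 1] s).get n

namespace IsStrictlyCausal

variable {F : Stream' α → Stream' α}

theorem take_iterate_eq (hF : IsStrictlyCausal F) (n : ℕ) (s t : Stream' α) :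
    (F^[n] s).take n = (F^[n] t).take n := by
  induction n with
  | zero => rfl
  | succ n ih =>
    rw [iterate_succ_apply', iterate_succ_apply']
    exact hF ih

theorem eq_of_isFixedPt (hF : IsStrictlyCausal F) {s t : Stream' α}
    (hs : IsFixedPt F s) (ht : IsFixedPt F t) : s = t := by
  refine take_theorem s t fun n => ?_
  rw [← hs.iterate n, ← ht.iterate n]
  exact hF.take_iterate_eq n s t

theorem take_iterateDiagonal (hF : IsStrictlyCausal F) (n : ℕ) (s : Stream' α) :
    (iterateDiagonal F s).take n = (F^[n] s).take n := by
  refine take_eq_take_iff.2 fun k hk => ?_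
  obtain ⟨m, rfl⟩ := Nat.exists_eq_add_of_le (Nat.succ_le_of_lt hk)
  rw [iterate_add_apply]
  exact take_eq_take_iff.1 (hF.take_iterate_eq (k + 1) s (F^[m] s)) k k.lt_succ_self

theorem isFixedPt_iterateDiagonal (hF : IsStrictlyCausal F) (s : Stream' α) :
    IsFixedPt F (iterateDiagonal F s) := by
  refine take_theorem _ _ fun n => ?_
  cases n with
  | zero => rfl
  | succ n =>
    calc (F (iterateDiagonal F s)).take (n + 1)
        = (F (F^[n] s)).take (n + 1) := hF (hF.take_iterateDiagonal n s)
      _ = (F^[n + 1] s).take (n + 1) := by rw [iterate_succ_apply']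
      _ = (iterateDiagonal F s).take (n + 1) := (hF.take_iterateDiagonal (n + 1) s).symm

theorem existsUnique_isFixedPt [Nonempty α] (hF : IsStrictlyCausal F) : ∃! s, IsFixedPt F s :=
  have ⟨a⟩ := ‹Nonempty α›
  ⟨iterateDiagonal F (Stream'.const a), hF.isFixedPt_iterateDiagonal _,
    fun _ hs => hF.eq_of_isFixedPt hs (hF.isFixedPt_iterateDiagonal _)⟩

end IsStrictlyCausal

theorem get_sshuffle (xs ys : Stream' ℕ) (n : ℕ) :
    (xs ⊗ ys).get n = ∑ k ∈ Finset.range (n + 1), n.choose k * xs.get k * ys.get (n - k) :=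
  rfl

theorem isCausal_sshuffle (xs : Stream' ℕ) : IsCausal (xs ⊗ ·) := by
  intro n ys zs h
  refine take_eq_take_iff.2 fun k hk => ?_
  simp only [get_sshuffle]
  refine Finset.sum_congr rfl fun i _ => ?_
  rw [take_eq_take_iff.1 h (k - i) (by lia)]

theorem existsUnique_eq_cons_sshuffle (a : ℕ) (xs : Stream' ℕ) :
    ∃! s, s = Stream'.cons a (xs ⊗ s) := by
  simpa only [IsFixedPt, eq_comm] using ((isCausal_sshuffle xs).cons a).existsUnique_isFixedPt

theorem stmt_10 :
    ∃! e : Stream' ℕ → Stream' ℕ,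
      ∀ xs, e xs = Stream'.cons (2 ^ xs.head) (xs.tail ⊗ e xs) := by
  obtain ⟨e, he⟩ := forall_existsUnique_iff.1 fun xs : Stream' ℕ =>
    existsUnique_eq_cons_sshuffle (2 ^ xs.head) xs.tail
  exact ⟨e, fun _ => he.2 rfl, fun f hf => funext fun xs => (he.1 (hf xs)).symm⟩
end
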